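/- The normal form is independent of the order of deletions: if S_0 = W × F, S_1, …, S_m are subsets of W × F such that for each i < m the set S_i \ S_{i+1} is nonempty and every pair in S_i \ S_{i+1} is unattractive in S_i, and if no pair of S_m is unattractive in S_m, then S_m = S*. -/

import Mathlib

/-- `(w,f)` blocks the matching `μ`: `f ≻_w μ(w)` and `w ≻_f μ⁻¹(f)`.
`prefW w f f'` means worker `w` strictly prefers firm `f` to firm `f'`;
`prefF f w w'` means firm `f` strictly prefers worker `w` to worker `w'`. -/
def Blocks {W F : Type*} (prefW : W → F → F → Prop) (prefF : F → W → W → Prop)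
    (μ : W ≃ F) (w : W) (f : F) : Prop :=
  prefW w f (μ w) ∧ prefF f w (μ.symm f)

/-- A matching is stable if no pair blocks it. -/
def IsStableMatching {W F : Type*} (prefW : W → F → F → Prop)
    (prefF : F → W → W → Prop) (μ : W ≃ F) : Prop :=
  ∀ w f, ¬ Blocks prefW prefF μ w f

/-- A pair `(w,f)` is unattractive in `S`. -/
def Unattractive {W F : Type*} (prefW : W → F → F → Prop) (prefF : F → W → W → Prop)
    (S : Set (W × F)) (w : W) (f : F) : Prop :=
  (∃ f', (w, f') ∈ S ∧ prefW w f' f ∧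
      ∀ w', w' ≠ w → (w', f') ∈ S → prefF f' w w') ∨
  (∃ w', (w', f) ∈ S ∧ prefF f w' w ∧
      ∀ f'', f'' ≠ f → (w', f'') ∈ S → prefW w' f f'')

/-- `delta S` is `S` with all pairs unattractive in `S` removed. -/
def delta {W F : Type*} (prefW : W → F → F → Prop) (prefF : F → W → W → Prop)
    (S : Set (W × F)) : Set (W × F) :=
  {p ∈ S | ¬ Unattractive prefW prefF S p.1 p.2}

/-- The normal form: the fixed point of `delta` reached by iterating from `W × F`.
Since `delta S ⊆ S` and `W × F` is finite, `Fintype.card (W × F)` iterations suffice. -/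
def NormalForm (W F : Type*) [Fintype W] [Fintype F]
    (prefW : W → F → F → Prop) (prefF : F → W → W → Prop) : Set (W × F) :=
  (delta prefW prefF)^[Fintype.card (W × F)] Set.univ

/-- `μ` is `S`-stable: `S`-admissible and no pair of `S` blocks it within `S`. -/
def SStable {W F : Type*} (prefW : W → F → F → Prop) (prefF : F → W → W → Prop)
    (S : Set (W × F)) (μ : W ≃ F) : Prop :=
  (∀ w, (w, μ w) ∈ S) ∧
  ∀ w f, (w, f) ∈ S → ¬ (prefW w f (μ w) ∧ prefF f w (μ.symm f))

/-- Arcs of the matching digraph `D(S)`: from `(w,f)` to `(w,f')` whenever `f' ≻_w f`,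
and from `(w,f)` to `(w',f)` whenever `w' ≻_f w`. -/
def Arc {W F : Type*} (prefW : W → F → F → Prop) (prefF : F → W → W → Prop)
    (S : Set (W × F)) (p q : W × F) : Prop :=
  p ∈ S ∧ q ∈ S ∧
    ((p.1 = q.1 ∧ prefW p.1 q.2 p.2) ∨ (p.2 = q.2 ∧ prefF p.2 q.1 p.1))

/-- `D(S)` contains a directed cycle: distinct vertices `c 0, …, c (n-1)` with `n ≥ 1`,
`c n = c 0`, and an arc from each vertex to the next. -/
def HasDirectedCycle {W F : Type*} (prefW : W → F → F → Prop)
    (prefF : F → W → W → Prop) (S : Set (W × F)) : Prop :=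
  ∃ (n : ℕ) (c : Fin (n + 1) → W × F), 0 < n ∧
    Function.Injective (fun i : Fin n => c i.castSucc) ∧
    c (Fin.last n) = c 0 ∧
    ∀ i : Fin n, Arc prefW prefF S (c i.castSucc) (c i.succ)

/-- The preference lists possess a cycle: there are `k ≥ 2`, distinct workers
`w_1, …, w_k` and distinct firms `f_1, …, f_k` (indexed by `ZMod k`) with
`f_{j+1} ≻_{w_j} f_j` and `w_j ≻_{f_j} w_{j-1}` for all `j`, indices modulo `k`. -/
def PrefCycle {W F : Type*} (prefW : W → F → F → Prop)
    (prefF : F → W → W → Prop) : Prop :=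
  ∃ k : ℕ, 2 ≤ k ∧ ∃ (ws : ZMod k → W) (fs : ZMod k → F),
    Function.Injective ws ∧ Function.Injective fs ∧
    ∀ j : ZMod k, prefW (ws j) (fs (j + 1)) (fs j) ∧ prefF (fs j) (ws j) (ws (j - 1))

section Deletion

variable {W F : Type*} {prefW : W → F → F → Prop} {prefF : F → W → W → Prop}

/-- `T` arises from `S` by deleting some pairs that are unattractive in `S`. -/
def DeletionStep (prefW : W → F → F → Prop) (prefF : F → W → W → Prop)
    (S T : Set (W × F)) : Prop :=
  T ⊆ S ∧ ∀ p ∈ S \ T, Unattractive prefW prefF S p.1 p.2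

/-- Unattractiveness is symmetric in the two sides of the market. -/
theorem unattractive_swap {S : Set (W × F)} {w : W} {f : F} :
    Unattractive prefF prefW (Prod.swap ⁻¹' S) f w ↔ Unattractive prefW prefF S w f :=
  or_comm

theorem DeletionStep.swap {S T : Set (W × F)} (h : DeletionStep prefW prefF S T) :
    DeletionStep prefF prefW (Prod.swap ⁻¹' S) (Prod.swap ⁻¹' T) :=
  ⟨fun _ hp => h.1 hp, fun p hp => unattractive_swap.2 (h.2 p.swap hp)⟩

/-- If `w` is the best worker for `f` in `S`, then after a deletion step some firm at least as
good for `w` as `f` still has `w` as its best worker. -/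
theorem DeletionStep.exists_top_pair [Finite F] (hW : ∀ w, IsStrictTotalOrder F (prefW w))
    (hF : ∀ f, IsStrictTotalOrder W (prefF f)) {S T : Set (W × F)}
    (h : DeletionStep prefW prefF S T) (w : W) (f : F) (hS : (w, f) ∈ S)
    (htop : ∀ w', w' ≠ w → (w', f) ∈ S → prefF f w w') :
    ∃ g, (w, g) ∈ T ∧ (g = f ∨ prefW w g f) ∧
      ∀ w', w' ≠ w → (w', g) ∈ T → prefF g w w' := by
  have := hW w
  induction f using (Finite.wellFounded_of_trans_of_irrefl (prefW w)).induction with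
  | _ f ih =>
    by_cases hT : (w, f) ∈ T
    · exact ⟨f, hT, Or.inl rfl, fun w' hne hw' => htop w' hne (h.1 hw')⟩
    · rcases h.2 (w, f) ⟨hS, hT⟩ with ⟨f', hf', hlt, htop'⟩ | ⟨v, hv, hlt, -⟩
      · obtain ⟨g, hg, hle, hgt⟩ := ih f' hlt hf' htop'
        refine ⟨g, hg, Or.inr ?_, hgt⟩
        rcases hle with rfl | hle
        · exact hlt
        · exact _root_.trans hle hlt
      · have := hF f
        have hne : v ≠ w := by
          rintro rfl
          exact irrefl _ hlt
        exact absurd hlt (asymm (htop v hne hv))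

/-- Unattractiveness persists under deletion steps. -/
theorem DeletionStep.unattractive [Finite W] [Finite F]
    (hW : ∀ w, IsStrictTotalOrder F (prefW w))
    (hF : ∀ f, IsStrictTotalOrder W (prefF f)) {S T : Set (W × F)}
    (h : DeletionStep prefW prefF S T) {w : W} {f : F}
    (hu : Unattractive prefW prefF S w f) : Unattractive prefW prefF T w f := by
  rcases hu with ⟨f', hf', hlt, htop⟩ | ⟨w', hw', hlt, htop⟩
  · have := hW w
    obtain ⟨g, hg, hle, hgt⟩ := h.exists_top_pair hW hF w f' hf' htop
    refine Or.inl ⟨g, hg, ?_, hgt⟩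
    rcases hle with rfl | hle
    · exact hlt
    · exact _root_.trans hle hlt
  · have := hF f
    obtain ⟨g, hg, hle, hgt⟩ := h.swap.exists_top_pair hF hW f w' hw' htop
    refine Or.inr ⟨g, hg, ?_, hgt⟩
    rcases hle with rfl | hle
    · exact hlt
    · exact _root_.trans hle hlt

/-- After any sequence of deletion steps starting from all pairs, every deleted pair is
unattractive in the remaining set. -/
theorem unattractive_of_notMem_of_reachable [Finite W] [Finite F]
    (hW : ∀ w, IsStrictTotalOrder F (prefW w))
    (hF : ∀ f, IsStrictTotalOrder W (prefF f)) {T : Set (W × F)}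
    (h : Relation.ReflTransGen (DeletionStep prefW prefF) Set.univ T) {p : W × F}
    (hp : p ∉ T) : Unattractive prefW prefF T p.1 p.2 := by
  induction h with
  | refl => exact absurd (Set.mem_univ p) hp
  | @tail B C _ hstep ih =>
    apply hstep.unattractive hW hF
    by_cases hB : p ∈ B
    · exact hstep.2 p ⟨hB, hp⟩
    · exact ih hB

/-- A pair unattractive in `S` stays unattractive in a subset `T` outside of which every pair is
unattractive in `T`. -/
theorem Unattractive.of_subset (hW : ∀ w, IsStrictTotalOrder F (prefW w))
    (hF : ∀ f, IsStrictTotalOrder W (prefF f)) {S T : Set (W × F)} (hTS : T ⊆ S)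
    (hT : ∀ p ∉ T, Unattractive prefW prefF T p.1 p.2) {w : W} {f : F}
    (hu : Unattractive prefW prefF S w f) : Unattractive prefW prefF T w f := by
  rcases hu with ⟨f', hf', hlt, htop⟩ | ⟨w', hw', hlt, htop⟩
  · by_cases hmem : (w, f') ∈ T
    · exact Or.inl ⟨f', hmem, hlt, fun v hne hv => htop v hne (hTS hv)⟩
    · rcases hT _ hmem with ⟨g, hg, hgt, hgtop⟩ | ⟨v, hv, hvt, -⟩
      · have := hW w
        exact Or.inl ⟨g, hg, _root_.trans hgt hlt, hgtop⟩
      · have := hF f'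
        have hne : v ≠ w := by
          rintro rfl
          exact irrefl _ hvt
        exact absurd hvt (asymm (htop v hne (hTS hv)))
  · by_cases hmem : (w', f) ∈ T
    · exact Or.inr ⟨w', hmem, hlt, fun g hne hg => htop g hne (hTS hg)⟩
    · rcases hT _ hmem with ⟨g, hg, hgt, -⟩ | ⟨v, hv, hvt, hvtop⟩
      · have := hW w'
        have hne : g ≠ f := by
          rintro rfl
          exact irrefl _ hgt
        exact absurd hgt (asymm (htop g hne (hTS hg)))
      · have := hF f
        exact Or.inr ⟨v, hv, _root_.trans hvt hlt, hvtop⟩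

/-- A set reachable by deletion steps and without unattractive pairs is contained in every set
reachable by deletion steps. -/
theorem subset_of_reachable [Finite W] [Finite F]
    (hW : ∀ w, IsStrictTotalOrder F (prefW w))
    (hF : ∀ f, IsStrictTotalOrder W (prefF f)) {S T : Set (W × F)}
    (hT : Relation.ReflTransGen (DeletionStep prefW prefF) Set.univ T)
    (hfix : ∀ p ∈ T, ¬ Unattractive prefW prefF T p.1 p.2)
    (hS : Relation.ReflTransGen (DeletionStep prefW prefF) Set.univ S) : T ⊆ S := by
  induction hS with
  | refl => exact Set.subset_univ T
  | @tail B C _ hstep ih =>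
    intro p hp
    by_contra hC
    exact hfix p hp (Unattractive.of_subset hW hF ih
      (fun _ hq => unattractive_of_notMem_of_reachable hW hF hT hq) (hstep.2 p ⟨ih hp, hC⟩))

theorem deletionStep_delta (S : Set (W × F)) :
    DeletionStep prefW prefF S (delta prefW prefF S) :=
  ⟨fun _ hp => hp.1, fun _ hp => by_contra fun hu => hp.2 ⟨hp.1, hu⟩⟩

theorem reachable_delta_iterate (k : ℕ) :
    Relation.ReflTransGen (DeletionStep prefW prefF) Set.univ
      ((delta prefW prefF)^[k] Set.univ) := by
  induction k with
  | zero => exact .refl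
  | succ k ih =>
    rw [Function.iterate_succ_apply']
    exact ih.tail (deletionStep_delta _)

theorem delta_iterate_fixed_or_ncard_add_le [Fintype W] [Fintype F] (k : ℕ) :
    delta prefW prefF ((delta prefW prefF)^[k] Set.univ) = (delta prefW prefF)^[k] Set.univ ∨
      ((delta prefW prefF)^[k] Set.univ).ncard + k ≤ Fintype.card (W × F) := by
  induction k with
  | zero => exact Or.inr (by simp [Set.ncard_univ])
  | succ k ih =>
    rw [Function.iterate_succ_apply']
    by_cases hfix : delta prefW prefF ((delta prefW prefF)^[k] Set.univ) =
        (delta prefW prefF)^[k] Set.univ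
    · exact Or.inl (congrArg _ hfix)
    · have hlt := Set.ncard_lt_ncard
        ((deletionStep_delta (prefW := prefW) (prefF := prefF)
          ((delta prefW prefF)^[k] Set.univ)).1.ssubset_of_ne hfix) (Set.toFinite _)
      have hle := ih.resolve_left hfix
      exact Or.inr (by omega)

theorem delta_normalForm [Fintype W] [Fintype F] :
    delta prefW prefF (NormalForm W F prefW prefF) = NormalForm W F prefW prefF := by
  rcases delta_iterate_fixed_or_ncard_add_le (prefW := prefW) (prefF := prefF)
    (Fintype.card (W × F)) with hfix | hle
  · exact hfix
  · have hempty : NormalForm W F prefW prefF = ∅ :=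
      (Set.ncard_eq_zero (Set.toFinite _)).1 (by rw [NormalForm]; omega)
    rw [hempty]
    exact Set.subset_empty_iff.1 (deletionStep_delta ∅).1

end Deletion

/-- The normal form is independent of the order of deletions. -/
theorem normalForm_order_independent {W F : Type*} [Fintype W] [Fintype F] [Nonempty W]
    (hcard : Fintype.card W = Fintype.card F)
    (prefW : W → F → F → Prop) (prefF : F → W → W → Prop)
    (hW : ∀ w, IsStrictTotalOrder F (prefW w))
    (hF : ∀ f, IsStrictTotalOrder W (prefF f))
    (m : ℕ) (S : ℕ → Set (W × F))
    (h0 : S 0 = Set.univ)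
    (hsub : ∀ i < m, S (i + 1) ⊆ S i)
    (hne : ∀ i < m, (S i \ S (i + 1)).Nonempty)
    (hdel : ∀ i < m, ∀ p ∈ S i \ S (i + 1), Unattractive prefW prefF (S i) p.1 p.2)
    (hfix : ∀ p ∈ S m, ¬ Unattractive prefW prefF (S m) p.1 p.2) :
    S m = NormalForm W F prefW prefF := by
  have hreach : ∀ i ≤ m, Relation.ReflTransGen (DeletionStep prefW prefF) Set.univ (S i) := by
    intro i
    induction i with
    | zero => exact fun _ => h0 ▸ .refl
    | succ i ih => exact fun hi => (ih (by omega)).tail ⟨hsub i hi, hdel i hi⟩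
  refine Set.Subset.antisymm
    (subset_of_reachable hW hF (hreach m le_rfl) hfix (reachable_delta_iterate _))
    (subset_of_reachable hW hF (reachable_delta_iterate _) (fun p hp => ?_) (hreach m le_rfl))
  exact (delta_normalForm.symm.subset hp).2
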